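/- arXiv:2306.17482 — 8 statements merged into one kernel-verified Lean document; each statement's English description precedes it below -/
import Mathlib

section
/- (1-WL upper-bounds graph transformers with node positional encodings.) Let G be a finite simple graph on vertex set V with edge labeling ℓ, and let h⁰ : V → ℝ^{d₀} be initial node embeddings (node features together with positional encodings). Consider a network computing states h¹, …, h^L where each layer is either (a) a message-passing layer: h^i(v) = f_i(h^{i-1}(v), multiset of pairs (ℓ(v,w), h^{i-1}(w)) over neighbors w of v in G), for an arbitrary function f_i, or (b) a global self-attention layer: h^i(v) = g_i(h^{i-1}(v), Attn(H^{i-1})_v), where H^{i-1} is the matrix stacking the states h^{i-1} as rows, Attn is single-head softmax attention with arbitrary weight matrices, and g_i is an arbitrary function. Let m be the total number of message-passing layers among the L layers. Then for all vertices u, v: if u and v are 1-WLE-equivalent at round m on G with initial coloring h⁰, then h^L(u) = h^L(v). -/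
namespace GT

/-- Multiset of neighbors of `v` in `G`. -/
noncomputable def nbrs {V : Type} [Fintype V] (G : SimpleGraph V) (v : V) : Multiset V :=
  (@Finset.filter V (fun w => G.Adj v w) (fun _ => Classical.propDecidable _) Finset.univ).val

/-- Canonical iterated color types for 1-WL: `A₀ = α`, `A_{i+1} = A_i × Multiset A_i`. -/
def WLColor (α : Type) : ℕ → Type
  | 0 => α
  | i + 1 => WLColor α i × Multiset (WLColor α i)

/-- 1-WL color refinement: `c_{i+1}(v) = (c_i(v), multiset of c_i(w) over neighbors w of v)`. -/
noncomputable def WL {V α : Type} [Fintype V] (G : SimpleGraph V) (c0 : V → α) :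
    (i : ℕ) → V → WLColor α i
  | 0 => c0
  | i + 1 => fun v => (WL G c0 i v, (nbrs G v).map (WL G c0 i))

/-- Canonical iterated color types for 1-WLE: `A₀ = α`, `A_{i+1} = A_i × Multiset (β × A_i)`. -/
def WLEColor (α β : Type) : ℕ → Type
  | 0 => α
  | i + 1 => WLEColor α β i × Multiset (β × WLEColor α β i)

/-- Edge-feature-aware 1-WL (1-WLE):
`c_{i+1}(v) = (c_i(v), multiset of pairs (ℓ(v,w), c_i(w)) over neighbors w of v)`. -/
noncomputable def WLE {V α β : Type} [Fintype V] (G : SimpleGraph V) (ℓ : Sym2 V → β)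
    (c0 : V → α) : (i : ℕ) → V → WLEColor α β i
  | 0 => c0
  | i + 1 => fun v => (WLE G ℓ c0 i v, (nbrs G v).map fun w => (ℓ s(v, w), WLE G ℓ c0 i w))

open Matrix

/-- Row-wise softmax: `(softmax x)_j = exp (x j) / ∑ k, exp (x k)`. -/
noncomputable def softmaxRow {ι : Type} [Fintype ι] (x : ι → ℝ) : ι → ℝ :=
  fun j => Real.exp (x j) / ∑ k, Real.exp (x k)

/-- Single-head softmax attention:
`Attn(C) = softmax (C Wᵠ (C Wᵏ)ᵀ / √d') * (C Wᵛ)`, with softmax applied row-wise. -/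
noncomputable def attn {V : Type} [Fintype V] {d d' : ℕ}
    (C : Matrix V (Fin d) ℝ) (WQ WK WV : Matrix (Fin d) (Fin d') ℝ) :
    Matrix V (Fin d') ℝ :=
  (Matrix.of fun u => softmaxRow fun w =>
    ((C * WQ) * (C * WK)ᵀ) u w / Real.sqrt (d' : ℝ)) * (C * WV)


/-- 1-WLE upper-bounds networks interleaving message-passing layers and global self-attention
layers (graph transformers with node positional encodings): if `u` and `v` are
1-WLE-equivalent at round `m`, where `m` is the number of message-passing layers, then the
final states of `u` and `v` agree. -/
theorem wle_bounds_graph_transformer {V β : Type} [Fintype V] (G : SimpleGraph V)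
    (ℓ : Sym2 V → β) (L : ℕ) (dims : ℕ → ℕ) (h : (i : ℕ) → V → Fin (dims i) → ℝ)
    (isMP : ℕ → Bool)
    (hlayer : ∀ i < L,
      if isMP i then
        -- message-passing layer
        ∃ f : (Fin (dims i) → ℝ) → Multiset (β × (Fin (dims i) → ℝ)) → Fin (dims (i + 1)) → ℝ,
          ∀ v : V, h (i + 1) v = f (h i v) ((nbrs G v).map fun w => (ℓ s(v, w), h i w))
      else
        -- global self-attention layer
        ∃ (d' : ℕ) (WQ WK WV : Matrix (Fin (dims i)) (Fin d') ℝ)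
          (g : (Fin (dims i) → ℝ) → (Fin d' → ℝ) → Fin (dims (i + 1)) → ℝ),
          ∀ v : V, h (i + 1) v = g (h i v) (attn (Matrix.of (h i)) WQ WK WV v))
    (u v : V)
    (heq : WLE G ℓ (h 0) (((Finset.range L).filter fun i => isMP i = true).card) u =
           WLE G ℓ (h 0) (((Finset.range L).filter fun i => isMP i = true).card) v) :
    h L u = h L v := by
  induction L generalizing u v with
  | zero => exact heq
  | succ L ih =>
    have ih' := ih (fun i hi => hlayer i (Nat.lt_succ_of_lt hi))
    have hL := hlayer L (Nat.lt_succ_self L)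
    rw [Finset.range_add_one, Finset.filter_insert] at heq
    by_cases hmp : isMP L = true
    · rw [if_pos hmp] at hL heq
      rw [Finset.card_insert_of_notMem (by simp)] at heq
      obtain ⟨f, hf⟩ := hL
      obtain ⟨φ, hφ⟩ := (Function.factorsThrough_iff (f := WLE G ℓ (h 0)
        (((Finset.range L).filter fun i => isMP i = true).card)) (h L)).1
        (fun a b hab => ih' a b hab)
      have h1 := congrArg Prod.fst heq
      have h2 := congrArg Prod.snd heq
      simp only [WLE] at h1 h2
      have h3 := congrArg (Multiset.map (Prod.map id φ)) h2
      rw [Multiset.map_map, Multiset.map_map] at h3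
      rw [hf, hf, ih' u v h1]
      congr 1
      rw [hφ]
      exact h3
    · rw [if_neg hmp] at hL heq
      obtain ⟨d', WQ, WK, WV, g, hg⟩ := hL
      have e := ih' u v heq
      have e2 : attn (Matrix.of (h L)) WQ WK WV u = attn (Matrix.of (h L)) WQ WK WV v := by
        funext j
        simp only [attn, Matrix.mul_apply, Matrix.of_apply, e]
      rw [hg, hg, e, e2]

end GT
end

section
/- (Message-passing GNNs with edge features are at most as powerful as 1-WLE.) Let G be a finite simple graph on vertex set V with node coloring c₀ : V → α and edge labeling ℓ with values in β. Let a message-passing network with edge features compute h⁰ = c₀ and h^i(v) = f_i(h^{i-1}(v), multiset of pairs (ℓ(v,w), h^{i-1}(w)) over neighbors w of v), where the f_i are arbitrary functions. Then for every i and all vertices u, v: if u and v are 1-WLE-equivalent at round i, then h^i(u) = h^i(v). -/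
namespace GT

/-- Message-passing GNNs with edge features are at most as powerful as 1-WLE: if `u` and `v`
are 1-WLE-equivalent at round `i`, then `h^i(u) = h^i(v)`. -/
theorem mpnn_le_wle {V β : Type} [Fintype V] (G : SimpleGraph V) (ℓ : Sym2 V → β)
    (S : ℕ → Type) (h : (i : ℕ) → V → S i)
    (f : (i : ℕ) → S i × Multiset (β × S i) → S (i + 1))
    (hf : ∀ (i : ℕ) (v : V),
      h (i + 1) v = f i (h i v, (nbrs G v).map fun w => (ℓ s(v, w), h i w))) :
    ∀ (i : ℕ) (u v : V), WLE G ℓ (h 0) i u = WLE G ℓ (h 0) i v → h i u = h i v := by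
  have key : ∀ i : ℕ, ∃ g : WLEColor (S 0) β i → S i, ∀ v, h i v = g (WLE G ℓ (h 0) i v) := by
    intro i
    induction i with
    | zero => exact ⟨fun x => x, fun v => rfl⟩
    | succ i ih =>
      obtain ⟨g, hg⟩ := ih
      refine ⟨fun (x : WLEColor (S 0) β i × Multiset (β × WLEColor (S 0) β i)) =>
        f i (g x.1, x.2.map fun p => (p.1, g p.2)), fun v => ?_⟩
      rw [hf]
      simp only [WLE, Multiset.map_map, Function.comp_def, hg]
  intro i u v huv
  obtain ⟨g, hg⟩ := key i
  rw [hg, hg, huv]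

end GT
end

section
/- (GIN with edge features and injective aggregation is exactly as powerful as 1-WLE.) Let G be a finite simple graph on vertex set V with node coloring c₀ : V → α and edge labeling ℓ with values in β. Suppose a message-passing network with edge features computes h⁰ = c₀ and h^i(v) = f_i(h^{i-1}(v), multiset of pairs (ℓ(v,w), h^{i-1}(w)) over neighbors w of v), where each f_i is an injective function of the pair (previous state, multiset of (edge label, neighbor state) pairs). Then for every round i and all vertices u, v: h^i(u) = h^i(v) if and only if u and v are 1-WLE-equivalent at round i. -/
namespace GT

theorem map_transfer {V A B β : Type} (p : V → A) (q : V → B)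
    (hpq : ∀ a b, p a = p b → q a = q b) (u : V) (s t : Multiset V) (k l : V → β)
    (hst : s.map (fun w => (k w, p w)) = t.map (fun w => (l w, p w))) :
    s.map (fun w => (k w, q w)) = t.map (fun w => (l w, q w)) := by
  have hfac : Function.FactorsThrough q p := fun a b hab => hpq a b hab
  have key := congrArg
    (Multiset.map (fun x : β × A => (x.1, Function.extend p q (fun _ => q u) x.2))) hst
  simpa only [Multiset.map_map, Function.comp_def, hfac.extend_apply] using key

/-- GIN with edge features and injective aggregation is exactly as powerful as 1-WLE:
with each `f_i` injective on pairs (previous state, multiset of (edge label, neighbor state)),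
`h^i(u) = h^i(v)` iff `u` and `v` are 1-WLE-equivalent at round `i`. -/
theorem gin_injective_iff_wle {V β : Type} [Fintype V] (G : SimpleGraph V) (ℓ : Sym2 V → β)
    (S : ℕ → Type) (h : (i : ℕ) → V → S i)
    (f : (i : ℕ) → S i × Multiset (β × S i) → S (i + 1))
    (hinj : ∀ i : ℕ, Function.Injective (f i))
    (hf : ∀ (i : ℕ) (v : V),
      h (i + 1) v = f i (h i v, (nbrs G v).map fun w => (ℓ s(v, w), h i w))) :
    ∀ (i : ℕ) (u v : V), h i u = h i v ↔ WLE G ℓ (h 0) i u = WLE G ℓ (h 0) i v := by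
  intro i
  induction i with
  | zero => intro u v; exact Iff.rfl
  | succ i ih =>
    intro u v
    rw [hf, hf, (hinj i).eq_iff, Prod.mk.injEq]
    refine Iff.trans ?_ (Prod.mk.injEq (WLE G ℓ (h 0) i u) _ (WLE G ℓ (h 0) i v) _).symm.to_iff
    rw [ih u v]
    refine and_congr_right fun _ => ⟨fun e => ?_, fun e => ?_⟩
    · exact map_transfer _ _ (fun a b => (ih a b).1) u _ _ _ _ e
    · exact map_transfer _ _ (fun a b => (ih a b).2) u _ _ _ _ e

end GT
end

section
/- (Equivalence of 1-WLE on G with 1-WL on the incidence graph T(G).) Let G be a finite simple graph with node coloring c₀ and edge labeling ℓ, and let T(G) be its incidence graph with the induced initial coloring. Then for every k ≥ 0 and all original vertices u, v of G: u and v are 1-WLE-equivalent at round k in G if and only if u and v (viewed as vertices of T(G)) are 1-WL-equivalent at round 2k in T(G). In particular, 1-WLE on G induces the same partition of the original vertices as 1-WL on T(G). -/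
namespace GT

/-- The incidence graph `T(G)`: vertices are `V ⊕ G.edgeSet`, and each edge-vertex `e`
is adjacent exactly to its two endpoints; there are no other edges. -/
def incidenceGraph {V : Type} (G : SimpleGraph V) : SimpleGraph (V ⊕ G.edgeSet) where
  Adj x y :=
    match x, y with
    | Sum.inl v, Sum.inr e => v ∈ (e : Sym2 V)
    | Sum.inr e, Sum.inl v => v ∈ (e : Sym2 V)
    | _, _ => False
  symm := ⟨by rintro (v | e) (w | f) h <;> exact h⟩
  loopless := ⟨by rintro (v | e) h <;> exact h⟩

noncomputable instance edgeSetFintype {V : Type} [Fintype V] (G : SimpleGraph V) :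
    Fintype G.edgeSet :=
  Set.Finite.fintype (Set.toFinite _)

/-- The induced initial coloring of `T(G)`: an original vertex `v` gets color `inl (c0 v)`,
an edge-vertex `e` gets color `inr (ℓ e)`. -/
def incInit {V α β : Type} (G : SimpleGraph V) (c0 : V → α) (ℓ : Sym2 V → β) :
    V ⊕ G.edgeSet → α ⊕ β :=
  Sum.elim (fun v => Sum.inl (c0 v)) (fun e => Sum.inr (ℓ (e : Sym2 V)))


theorem mem_nbrs {V : Type} [Fintype V] (G : SimpleGraph V) (v w : V) :
    w ∈ nbrs G v ↔ G.Adj v w := by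
  simp [nbrs]

theorem nodup_nbrs {V : Type} [Fintype V] (G : SimpleGraph V) (v : V) : (nbrs G v).Nodup :=
  Finset.nodup _

theorem map_transfer_s6 {A B C : Type} {s t : Multiset A} {f f' : A → B} {g g' : A → C}
    (h : s.map f = t.map f') (H : ∀ x y, f x = f' y → g x = g' y) : s.map g = t.map g' := by
  rw [← Multiset.rel_eq, Multiset.rel_map] at h ⊢
  exact h.mono fun x _ y _ hxy => H x y hxy

/-- Color of the edge vertex. -/
noncomputable def colE {V α β : Type} [Fintype V] (G : SimpleGraph V) (c0 : V → α)
    (ℓ : Sym2 V → β) : (i : ℕ) → V → V → WLColor (α ⊕ β) i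
  | 0 => fun u w => (Sum.inr (ℓ s(u, w)) : α ⊕ β)
  | i + 1 => fun u w => (colE G c0 ℓ i u w,
      {WL (incidenceGraph G) (incInit G c0 ℓ) i (Sum.inl u),
       WL (incidenceGraph G) (incInit G c0 ℓ) i (Sum.inl w)})

theorem nbrs_inr {V : Type} [Fintype V] (G : SimpleGraph V) (u w : V) (h : G.Adj u w) :
    nbrs (incidenceGraph G) (Sum.inr ⟨s(u, w), h⟩) = {Sum.inl u, Sum.inl w} := by
  refine (Multiset.Nodup.ext (nodup_nbrs _ _) ?_).2 ?_
  · simp [h.ne]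
  · rintro (x | e)
    · rw [mem_nbrs]; simp [incidenceGraph]
    · rw [mem_nbrs]; simp [incidenceGraph]

theorem WL_inr {V α β : Type} [Fintype V] (G : SimpleGraph V) (c0 : V → α)
    (ℓ : Sym2 V → β) (i : ℕ) (u w : V) (h : G.Adj u w) :
    WL (incidenceGraph G) (incInit G c0 ℓ) i (Sum.inr ⟨s(u, w), h⟩) = colE G c0 ℓ i u w := by
  induction i with
  | zero => rfl
  | succ i ih => simp only [WL, colE, nbrs_inr, ih]; simp; rfl

theorem WL_inl {V α β : Type} [Fintype V] (G : SimpleGraph V) (c0 : V → α)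
    (ℓ : Sym2 V → β) (i : ℕ) (v : V) :
    (nbrs (incidenceGraph G) (Sum.inl v)).map (WL (incidenceGraph G) (incInit G c0 ℓ) i) =
      (nbrs G v).map (colE G c0 ℓ i v) := by
  symm
  refine Multiset.map_eq_map_of_bij_of_nodup _ _ (nodup_nbrs _ _) (nodup_nbrs _ _)
    (fun w hw => Sum.inr ⟨s(v, w), (mem_nbrs G v w).1 hw⟩) ?_ ?_ ?_ ?_
  · intro w hw; rw [mem_nbrs]; simp [incidenceGraph]
  · intro w hw x hx h
    have h' : s(v, w) = s(v, x) := congrArg Subtype.val (Sum.inr_injective h)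
    exact Sym2.congr_right.1 h'
  · rintro (x | ⟨e, he⟩) hb
    · rw [mem_nbrs] at hb; exact hb.elim
    · rw [mem_nbrs] at hb
      obtain ⟨w, rfl⟩ : v ∈ e := hb
      exact ⟨w, (mem_nbrs G v w).2 he, rfl⟩
  · intro w hw
    exact (WL_inr G c0 ℓ i v w _).symm

theorem colE_eq {V α β : Type} [Fintype V] (G : SimpleGraph V) (c0 : V → α)
    (ℓ : Sym2 V → β) (i : ℕ) (u w v x : V) (hl : ℓ s(u, w) = ℓ s(v, x))
    (h1 : WL (incidenceGraph G) (incInit G c0 ℓ) i (Sum.inl u) =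
      WL (incidenceGraph G) (incInit G c0 ℓ) i (Sum.inl v))
    (h2 : WL (incidenceGraph G) (incInit G c0 ℓ) i (Sum.inl w) =
      WL (incidenceGraph G) (incInit G c0 ℓ) i (Sum.inl x)) :
    colE G c0 ℓ (i + 1) u w = colE G c0 ℓ (i + 1) v x := by
  have hp : ({WL (incidenceGraph G) (incInit G c0 ℓ) i (Sum.inl u),
      WL (incidenceGraph G) (incInit G c0 ℓ) i (Sum.inl w)} : Multiset _) =
      {WL (incidenceGraph G) (incInit G c0 ℓ) i (Sum.inl v),
      WL (incidenceGraph G) (incInit G c0 ℓ) i (Sum.inl x)} := by rw [h1, h2]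
  refine Prod.ext ?_ hp
  clear hp
  induction i with
  | zero => exact congrArg Sum.inr hl
  | succ i ih =>
    have h1' := congrArg Prod.fst h1
    have h2' := congrArg Prod.fst h2
    simp only [WL] at h1' h2'
    refine Prod.ext (ih h1' h2') ?_
    simp only [colE]
    rw [h1', h2']

theorem colE_label {V α β : Type} [Fintype V] (G : SimpleGraph V) (c0 : V → α)
    (ℓ : Sym2 V → β) (i : ℕ) (u w v x : V)
    (h : colE G c0 ℓ i u w = colE G c0 ℓ i v x) : ℓ s(u, w) = ℓ s(v, x) := by
  induction i with
  | zero => exact Sum.inr_injective h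
  | succ i ih => exact ih (congrArg Prod.fst h)

theorem WL_inl_succ {V α β : Type} [Fintype V] (G : SimpleGraph V) (c0 : V → α)
    (ℓ : Sym2 V → β) (i : ℕ) (u v : V) :
    WL (incidenceGraph G) (incInit G c0 ℓ) (i + 1) (Sum.inl u) =
      WL (incidenceGraph G) (incInit G c0 ℓ) (i + 1) (Sum.inl v) ↔
    WL (incidenceGraph G) (incInit G c0 ℓ) i (Sum.inl u) =
      WL (incidenceGraph G) (incInit G c0 ℓ) i (Sum.inl v) ∧
    (nbrs G u).map (colE G c0 ℓ i u) = (nbrs G v).map (colE G c0 ℓ i v) := by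
  rw [← WL_inl, ← WL_inl]
  exact Prod.ext_iff

/-- 1-WLE on `G` is equivalent to 1-WL on the incidence graph `T(G)`: original vertices are
1-WLE-equivalent at round `k` in `G` iff they are 1-WL-equivalent at round `2k` in `T(G)`. -/
theorem wle_iff_wl_incidenceGraph {V α β : Type} [Fintype V] (G : SimpleGraph V)
    (c0 : V → α) (ℓ : Sym2 V → β) (k : ℕ) (u v : V) :
    WLE G ℓ c0 k u = WLE G ℓ c0 k v ↔
      WL (incidenceGraph G) (incInit G c0 ℓ) (2 * k) (Sum.inl u) =
        WL (incidenceGraph G) (incInit G c0 ℓ) (2 * k) (Sum.inl v) := by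
  induction k generalizing u v with
  | zero => exact Sum.inl_injective.eq_iff.symm
  | succ k ih =>
    have e : 2 * (k + 1) = 2 * k + 1 + 1 := by ring
    rw [e, WL_inl_succ, WL_inl_succ]
    have hE : WLE G ℓ c0 (k + 1) u = WLE G ℓ c0 (k + 1) v ↔
        WLE G ℓ c0 k u = WLE G ℓ c0 k v ∧
        ((nbrs G u).map fun w => (ℓ s(u, w), WLE G ℓ c0 k w)) =
          (nbrs G v).map fun w => (ℓ s(v, w), WLE G ℓ c0 k w) := Prod.ext_iff
    rw [hE, ih]
    constructor
    · rintro ⟨h1, h2⟩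
      have h3 : (nbrs G u).map (colE G c0 ℓ (2 * k + 1) u) =
          (nbrs G v).map (colE G c0 ℓ (2 * k + 1) v) := by
        refine map_transfer_s6 h2 fun x y hxy => ?_
        obtain ⟨hl, hc⟩ := Prod.ext_iff.1 hxy
        exact colE_eq G c0 ℓ _ _ _ _ _ hl h1 ((ih _ _).1 hc)
      exact ⟨⟨h1, map_transfer_s6 h3 fun x y hxy => congrArg Prod.fst hxy⟩, h3⟩
    · rintro ⟨⟨h1, -⟩, h3⟩
      refine ⟨h1, map_transfer_s6 h3 fun x y hxy => ?_⟩
      have hl := colE_label G c0 ℓ _ _ _ _ _ hxy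
      have hp := congrArg Prod.snd hxy
      simp only [colE] at hp
      rw [h1] at hp
      have hq := Multiset.singleton_inj.1 ((Multiset.cons_inj_right _).1 hp)
      exact Prod.ext hl ((ih _ _).2 hq)

end GT
end

section
/- (1-WLE is equivalent in distinguishing power to 2-WL.) Let G and H be two finite simple graphs with the same number of vertices, with node colorings into a common type α and edge labelings into a common type β, and take all 1-WLE colors and all 2-WL colors in the canonical iterated color types so that colors of different graphs are comparable. Then the following are equivalent: (i) for every round i, the multiset of round-i 1-WLE colors of the vertices of G equals the multiset of round-i 1-WLE colors of the vertices of H; (ii) for every round i, the multiset of round-i 2-WL colors of ordered vertex pairs of G equals the multiset of round-i 2-WL colors of ordered vertex pairs of H. -/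
namespace GT

/-- Canonical iterated color types for 2-WL: the initial color records the pair of node
colors, whether the two vertices are equal, whether they are adjacent, and the edge label if
adjacent; the refined color at round `i+1` is a multiset over round-`i` data. -/
def WL2Color (α β : Type) : ℕ → Type
  | 0 => (α × α) × Bool × Bool × Option β
  | i + 1 => Multiset (WL2Color α β i ⊕ Multiset (WL2Color α β i))

/-- The 2-WL colorings on ordered pairs:
`C_{i+1}(v₁,v₂) = {C_i(v₁,v₂), {C_i(w,v₂) : w}, {C_i(v₁,w) : w}}` as a multiset. -/
noncomputable def WL2 {V α β : Type} [Fintype V] (G : SimpleGraph V) (c0 : V → α)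
    (ℓ : Sym2 V → β) : (i : ℕ) → V × V → WL2Color α β i
  | 0 => fun p =>
      ((c0 p.1, c0 p.2),
        @decide (p.1 = p.2) (Classical.propDecidable _),
        @decide (G.Adj p.1 p.2) (Classical.propDecidable _),
        @ite _ (G.Adj p.1 p.2) (Classical.propDecidable _) (some (ℓ s(p.1, p.2))) none)
  | i + 1 => fun p =>
      show Multiset (WL2Color α β i ⊕ Multiset (WL2Color α β i)) from
      {Sum.inl (WL2 G c0 ℓ i p),
       Sum.inr (Finset.univ.val.map fun w => WL2 G c0 ℓ i (w, p.2)),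
       Sum.inr (Finset.univ.val.map fun w => WL2 G c0 ℓ i (p.1, w))}

theorem map_eq_iff_equiv {V W γ : Type} [Fintype V] [Fintype W] (f : V → γ) (g : W → γ) :
    Finset.univ.val.map f = Finset.univ.val.map g ↔ ∃ e : V ≃ W, ∀ v, f v = g (e v) := by
  classical
  constructor
  · intro h
    have key : ∀ c, Nonempty ({v // f v = c} ≃ {w // g w = c}) := by
      intro c
      refine ⟨Fintype.equivOfCardEq ?_⟩
      have h2 := congrArg (Multiset.count c) h
      rw [Multiset.count_map, Multiset.count_map] at h2
      rw [Fintype.card_subtype, Fintype.card_subtype]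
      simp only [eq_comm (a := c)] at h2
      exact h2
    exact ⟨Equiv.ofFiberEquiv (fun c => (key c).some),
      fun v => (Equiv.ofFiberEquiv_map _ v).symm⟩
  · rintro ⟨e, he⟩
    rw [← Multiset.map_univ_val_equiv e, Multiset.map_map]
    exact Multiset.map_congr rfl (fun v _ => he v)

/-- Symmetric atomic compatibility of pairs. -/
def Atp {V W β : Type} (G : SimpleGraph V) (H : SimpleGraph W) (ℓG : Sym2 V → β)
    (ℓH : Sym2 W → β) (v u : V) (v' u' : W) : Prop :=
  (v = u ↔ v' = u') ∧ (G.Adj v u ↔ H.Adj v' u') ∧ (G.Adj v u → ℓG s(v, u) = ℓH s(v', u'))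

theorem Atp.swap {V W β : Type} {G : SimpleGraph V} {H : SimpleGraph W} {ℓG : Sym2 V → β}
    {ℓH : Sym2 W → β} {v u : V} {v' u' : W} (h : Atp G H ℓG ℓH v u v' u') :
    Atp G H ℓG ℓH u v u' v' := by
  obtain ⟨h1, h2, h3⟩ := h
  refine ⟨by rw [eq_comm, h1, eq_comm], by rw [G.adj_comm, h2, H.adj_comm], fun h => ?_⟩
  rw [Sym2.eq_swap, h3 h.symm, Sym2.eq_swap]

theorem Atp.swapl {V W β : Type} {G : SimpleGraph V} {H : SimpleGraph W} {ℓG : Sym2 V → β}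
    {ℓH : Sym2 W → β} {v u : V} {v' u' : W} (h : Atp G H ℓG ℓH v u v' u') :
    Atp G H ℓG ℓH u v v' u' := by
  obtain ⟨h1, h2, h3⟩ := h
  refine ⟨by rw [eq_comm, h1], by rw [G.adj_comm, h2], fun h => ?_⟩
  rw [Sym2.eq_swap, h3 h.symm]

theorem nbrs_map_eq {V W γ : Type} [Fintype V] [Fintype W] (G : SimpleGraph V)
    (H : SimpleGraph W) (v : V) (v' : W) (e : V ≃ W) (f : V → γ) (g : W → γ)
    (ha : ∀ u, G.Adj v u ↔ H.Adj v' (e u)) (hf : ∀ u, G.Adj v u → f u = g (e u)) :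
    (nbrs G v).map f = (nbrs H v').map g := by
  classical
  have h : nbrs H v' = (nbrs G v).map e := by
    refine (Multiset.Nodup.ext (Finset.nodup _)
      ((Finset.nodup _).map e.injective)).2 (fun w => ?_)
    simp only [nbrs, Finset.mem_val, Finset.mem_filter, Finset.mem_univ, true_and,
      Multiset.mem_map]
    constructor
    · intro hw
      exact ⟨e.symm w, by rw [ha]; simpa using hw, by simp⟩
    · rintro ⟨u, hu, rfl⟩
      exact (ha u).1 hu
  rw [h, Multiset.map_map]
  refine Multiset.map_congr rfl (fun u hu => hf u ?_)
  simpa [nbrs] using hu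

section
variable {V W α β : Type} [Fintype V] [Fintype W]
    {G : SimpleGraph V} {H : SimpleGraph W}
    {cG : V → α} {cH : W → α} {ℓG : Sym2 V → β} {ℓH : Sym2 W → β}

theorem row_step (i : ℕ) (v : V) (v' : W) (e : V ≃ W)
    (h : ∀ u, Atp G H ℓG ℓH v u v' (e u) ∧
      (s(WLE G ℓG cG i v, WLE G ℓG cG i u) = s(WLE H ℓH cH i v', WLE H ℓH cH i (e u)))) :
    WLE G ℓG cG (i + 1) v = WLE H ℓH cH (i + 1) v' := by
  have hv : v' = e v := (h v).1.1.1 rfl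
  have h0 : WLE G ℓG cG i v = WLE H ℓH cH i v' := by
    have := (h v).2
    rw [← hv] at this
    rcases Sym2.eq_iff.1 this with h | h <;> exact h.1
  have h1 : ∀ u, WLE G ℓG cG i u = WLE H ℓH cH i (e u) := by
    intro u
    have := (h u).2
    rw [h0] at this
    exact Sym2.congr_right.1 this
  refine Prod.ext h0 ?_
  refine nbrs_map_eq G H v v' e _ _ (fun u => (h u).1.2.1) (fun u hu => ?_)
  rw [h1 u, (h u).1.2.2 hu]

theorem three_eq {A B : Type} {a a' : A} {x y x' y' : B}
    (h : ({Sum.inl a, Sum.inr x, Sum.inr y} : Multiset (A ⊕ B)) =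
      {Sum.inl a', Sum.inr x', Sum.inr y'}) :
    a = a' ∧ (x = x' ∧ y = y' ∨ x = y' ∧ y = x') := by
  have ha : a = a' := by
    have : Sum.inl a ∈ ({Sum.inl a', Sum.inr x', Sum.inr y'} : Multiset (A ⊕ B)) := by
      rw [← h]; simp
    simpa using this
  subst ha
  refine ⟨rfl, ?_⟩
  simp only [Multiset.insert_eq_cons, Multiset.cons_inj_right] at h
  rw [Multiset.cons_eq_cons] at h
  rcases h with ⟨h1, h2⟩ | ⟨h1, cs, h2, h3⟩
  · exact Or.inl ⟨by simpa using h1, by simpa using h2⟩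
  · right
    have e1 := Multiset.mem_cons_self (Sum.inr x') cs
    have e2 := Multiset.mem_cons_self (Sum.inr x) cs
    rw [← h2] at e1
    rw [← h3] at e2
    simp only [Multiset.mem_singleton, Sum.inr.injEq] at e1 e2
    exact ⟨e2, e1.symm⟩

theorem back (i : ℕ) : ∀ (v w : V) (v' w' : W),
    WL2 G cG ℓG i (v, w) = WL2 H cH ℓH i (v', w') →
    Atp G H ℓG ℓH v w v' w' ∧
      (s(WLE G ℓG cG i v, WLE G ℓG cG i w) = s(WLE H ℓH cH i v', WLE H ℓH cH i w')) := by
  classical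
  induction i with
  | zero =>
    intro v w v' w' h
    have h1 := congrArg (fun x : (α × α) × Bool × Bool × Option β => x.1) h
    have h2 := congrArg (fun x : (α × α) × Bool × Bool × Option β => x.2.1) h
    have h3 := congrArg (fun x : (α × α) × Bool × Bool × Option β => x.2.2.1) h
    have h4 := congrArg (fun x : (α × α) × Bool × Bool × Option β => x.2.2.2) h
    simp only [WL2, decide_eq_decide, Prod.mk.injEq] at h1 h2 h3 h4
    refine ⟨⟨h2, h3, fun hh => ?_⟩, ?_⟩
    · rw [if_pos hh, if_pos (h3.1 hh)] at h4
      exact Option.some.inj h4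
    · exact Sym2.eq_iff.2 (Or.inl h1)
  | succ i ih =>
    intro v w v' w' h
    obtain ⟨h0, h1⟩ := three_eq h
    refine ⟨(ih _ _ _ _ h0).1, ?_⟩
    simp only [map_eq_iff_equiv] at h1
    rcases h1 with ⟨⟨e, he⟩, ⟨e', he'⟩⟩ | ⟨⟨e, he⟩, ⟨e', he'⟩⟩
    · rw [row_step i w w' e (fun u => ⟨(ih _ _ _ _ (he u)).1.swap, by
        rw [Sym2.eq_swap, (ih _ _ _ _ (he u)).2, Sym2.eq_swap]⟩),
        row_step i v v' e' (fun u => ih _ _ _ _ (he' u))]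
    · rw [row_step i w v' e (fun u => ⟨(ih _ _ _ _ (he u)).1.swapl, by
        rw [Sym2.eq_swap, (ih _ _ _ _ (he u)).2]⟩),
        row_step i v w' e' (fun u => ⟨(ih _ _ _ _ (he' u)).1.swapl.swap, by
        rw [(ih _ _ _ _ (he' u)).2, Sym2.eq_swap]⟩), Sym2.eq_swap]

theorem split_univ (γ : Type) (G : SimpleGraph V) (v : V) : ∃ r : Multiset V,
    (Finset.univ : Finset V).val = {v} + nbrs G v + r ∧ ∀ u ∈ r, v ≠ u ∧ ¬ G.Adj v u := by
  classical
  refine ⟨(Finset.univ.filter (fun u => v ≠ u ∧ ¬ G.Adj v u)).val, ?_, by simp⟩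
  have hn : nbrs G v = (Finset.univ.filter (fun u => G.Adj v u)).val := by
    unfold nbrs; congr
  rw [hn]
  ext u
  have h1 := Multiset.count_eq_one_of_mem (Finset.univ : Finset V).nodup (Finset.mem_univ u)
  simp only [Multiset.count_add, h1, Finset.filter_val, Multiset.count_filter,
    Multiset.count_singleton]
  by_cases huv : u = v
  · subst huv; simp
  · have : v ≠ u := fun h => huv h.symm
    by_cases ha : G.Adj v u <;> simp [huv, this, ha]

theorem get_equiv (i : ℕ)
    (ht : Finset.univ.val.map (WLE G ℓG cG i) = Finset.univ.val.map (WLE H ℓH cH i))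
    (v : V) (v' : W) (h : WLE G ℓG cG (i + 1) v = WLE H ℓH cH (i + 1) v') :
    ∃ e : V ≃ W, ∀ u, Atp G H ℓG ℓH v u v' (e u) ∧
      WLE G ℓG cG i u = WLE H ℓH cH i (e u) := by
  classical
  have h0 : WLE G ℓG cG i v = WLE H ℓH cH i v' := congrArg Prod.fst h
  have h1 : (nbrs G v).map (fun w => (ℓG s(v, w), WLE G ℓG cG i w)) =
    (nbrs H v').map (fun w => (ℓH s(v', w), WLE H ℓH cH i w)) := congrArg Prod.snd h
  obtain ⟨r, hr, hr'⟩ := split_univ Unit G v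
  obtain ⟨t, hs, hs'⟩ := split_univ Unit H v'
  have h2 : (nbrs G v).map (WLE G ℓG cG i) = (nbrs H v').map (WLE H ℓH cH i) := by
    have := congrArg (Multiset.map Prod.snd) h1
    simpa [Multiset.map_map, Function.comp_def] using this
  have h3 : r.map (WLE G ℓG cG i) = t.map (WLE H ℓH cH i) := by
    rw [hr, hs] at ht
    simp only [Multiset.map_add, Multiset.map_singleton, h0, h2] at ht
    exact add_left_cancel ht
  let τG : V → WLEColor α β i × Bool × Option β := fun u =>
    (WLE G ℓG cG i u, decide (v = u), if G.Adj v u then some (ℓG s(v, u)) else none)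
  let τH : W → WLEColor α β i × Bool × Option β := fun u =>
    (WLE H ℓH cH i u, decide (v' = u), if H.Adj v' u then some (ℓH s(v', u)) else none)
  have key : Finset.univ.val.map τG = Finset.univ.val.map τH := by
    rw [hr, hs]
    simp only [Multiset.map_add, Multiset.map_singleton]
    congr 1
    · congr 1
      · simp [τG, τH, h0]
      · have := congrArg (Multiset.map
          (fun x : β × WLEColor α β i => (x.2, false, some x.1))) h1
        rw [Multiset.map_map, Multiset.map_map] at this
        convert this using 1
        · refine Multiset.map_congr rfl (fun u hu => ?_)
          have hu : G.Adj v u := by simpa [nbrs] using hu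
          simp [τG, hu, hu.ne]
        · refine Multiset.map_congr rfl (fun u hu => ?_)
          have hu : H.Adj v' u := by simpa [nbrs] using hu
          simp [τH, hu, hu.ne]
    · have := congrArg (Multiset.map
          (fun x : WLEColor α β i => (x, false, (none : Option β)))) h3
      rw [Multiset.map_map, Multiset.map_map] at this
      convert this using 1
      · refine Multiset.map_congr rfl (fun u hu => ?_)
        simp [τG, hr' u hu]
      · refine Multiset.map_congr rfl (fun u hu => ?_)
        simp [τH, hs' u hu]
  obtain ⟨e, he⟩ := (map_eq_iff_equiv _ _).1 key
  refine ⟨e, fun u => ?_⟩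
  have := he u
  simp only [τG, τH, Prod.mk.injEq, decide_eq_decide] at this
  obtain ⟨a, b, c⟩ := this
  refine ⟨⟨b, ?_, ?_⟩, a⟩
  · by_cases x : G.Adj v u <;> by_cases y : H.Adj v' (e u) <;> simp [x, y] at c ⊢
  · intro x
    by_cases y : H.Adj v' (e u) <;> simp [x, y] at c ⊢
    exact c

theorem forw
    (ht : ∀ i, Finset.univ.val.map (WLE G ℓG cG i) = Finset.univ.val.map (WLE H ℓH cH i))
    (i : ℕ) : ∀ (v w : V) (v' w' : W), Atp G H ℓG ℓH v w v' w' →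
    WLE G ℓG cG i v = WLE H ℓH cH i v' → WLE G ℓG cG i w = WLE H ℓH cH i w' →
    WL2 G cG ℓG i (v, w) = WL2 H cH ℓH i (v', w') := by
  classical
  induction i with
  | zero =>
    intro v w v' w' h hv hw
    obtain ⟨h1, h2, h3⟩ := h
    simp only [WLE] at hv hw
    simp only [WL2, hv, hw, h1, h2]
    by_cases x : H.Adj v' w'
    · simp [x, h3 (h2.2 x)]
      rfl
    · simp [x]
      rfl
  | succ i ih =>
    intro v w v' w' h hv hw
    have hv0 : WLE G ℓG cG i v = WLE H ℓH cH i v' := congrArg Prod.fst hv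
    have hw0 : WLE G ℓG cG i w = WLE H ℓH cH i w' := congrArg Prod.fst hw
    obtain ⟨e, he⟩ := get_equiv i (ht i) v v' hv
    obtain ⟨f, hf⟩ := get_equiv i (ht i) w w' hw
    have r1 := (map_eq_iff_equiv (fun u => WL2 G cG ℓG i (u, w))
      (fun u => WL2 H cH ℓH i (u, w'))).2
      ⟨f, fun u => ih _ _ _ _ (hf u).1.swap (hf u).2 hw0⟩
    have r2 := (map_eq_iff_equiv (fun u => WL2 G cG ℓG i (v, u))
      (fun u => WL2 H cH ℓH i (v', u))).2
      ⟨e, fun u => ih _ _ _ _ (he u).1 hv0 (he u).2⟩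
    simp only [WL2]
    rw [ih _ _ _ _ h hv0 hw0, r1, r2]

end

/-- 1-WLE is equivalent in distinguishing power to 2-WL: for graphs `G`, `H` with the same
number of vertices, the multisets of 1-WLE colors agree at every round iff the multisets of
2-WL colors of ordered pairs agree at every round. -/
theorem wle_equiv_wl2_distinguishing {V W α β : Type} [Fintype V] [Fintype W]
    (G : SimpleGraph V) (H : SimpleGraph W) (hcard : Fintype.card V = Fintype.card W)
    (cG : V → α) (cH : W → α) (ℓG : Sym2 V → β) (ℓH : Sym2 W → β) :
    (∀ i : ℕ,
      Finset.univ.val.map (WLE G ℓG cG i) = Finset.univ.val.map (WLE H ℓH cH i)) ↔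
    (∀ i : ℕ,
      Finset.univ.val.map (fun p : V × V => WL2 G cG ℓG i p) =
        Finset.univ.val.map (fun p : W × W => WL2 H cH ℓH i p)) := by
  classical
  constructor
  · intro ht i
    obtain ⟨f, hf⟩ := (map_eq_iff_equiv _ _).1 (ht (i + 1))
    choose e he using fun v => get_equiv i (ht i) v (f v) (hf v)
    refine (map_eq_iff_equiv _ _).2 ⟨Equiv.prodShear f e, fun p => ?_⟩
    exact forw ht i p.1 p.2 (f p.1) (e p.1 p.2) (he p.1 p.2).1
      (congrArg Prod.fst (hf p.1)) (he p.1 p.2).2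
  · intro h i
    obtain ⟨e, he⟩ := (map_eq_iff_equiv _ _).1 (h i)
    have hb := fun v w => back i v w (e (v, w)).1 (e (v, w)).2 (he (v, w))
    have hd : ∀ v, (e (v, v)).1 = (e (v, v)).2 := fun v => (hb v v).1.1.1 rfl
    have hd' : ∀ v w, (e (v, w)).1 = (e (v, w)).2 → v = w := fun v w => (hb v w).1.1.2
    have hbij : Function.Bijective (fun v => (e (v, v)).1) := by
      constructor
      · intro v w hvw
        have : e (v, v) = e (w, w) := Prod.ext hvw (by rw [← hd, ← hd]; exact hvw)
        exact congrArg Prod.fst (e.injective this)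
      · intro w
        obtain ⟨⟨a, b⟩, hab⟩ := e.surjective (w, w)
        have : a = b := hd' a b (by rw [hab])
        subst this
        exact ⟨a, by simp [hab]⟩
    refine (map_eq_iff_equiv _ _).2 ⟨Equiv.ofBijective _ hbij, fun v => ?_⟩
    have := (hb v v).2
    rw [← hd] at this
    rcases Sym2.eq_iff.1 this with h | h <;> exact h.1

end GT
end

section
/- (Edge-feature reduction is strictly weaker than 1-WLE.) There exists a finite simple graph G with an edge labeling ℓ (taking values in {0,1,2,3}), a constant node coloring, and two vertices u, v of G, such that: (i) for every round i, u and v are 1-WL-equivalent at round i when 1-WL is run on G with initial node coloring assigning to each vertex x the multiset of labels ℓ(x,w) of its incident edges; but (ii) u and v are not 1-WLE-equivalent at round 2 when 1-WLE is run on G with the constant node coloring and edge labeling ℓ. A witness exists on 10 vertices. -/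
namespace GT

/-- Edge labels of the witness. -/
def exLab (e : Sym2 (Fin 10)) : Fin 4 :=
  if e = s(0, 2) ∨ e = s(1, 3) then 0 else if e = s(0, 3) ∨ e = s(1, 2) then 1 else 2

/-- A 4-cycle `0 2 1 3` with a pendant vertex `4` at `2`, and isolated vertices. -/
def exG : SimpleGraph (Fin 10) where
  Adj x y := s(x, y) ∈ ([s(0, 2), s(0, 3), s(1, 2), s(1, 3), s(2, 4)] : List (Sym2 (Fin 10)))
  symm := ⟨fun x y h => by rwa [Sym2.eq_swap (a := y) (b := x)]⟩
  loopless := ⟨by decide⟩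

instance exDec : DecidableRel exG.Adj := fun x y => by unfold exG; infer_instance

theorem nbrs_exG (v : Fin 10) : nbrs exG v = (Finset.univ.filter (fun w => exG.Adj v w)).val := by
  unfold nbrs
  congr

theorem n0 : nbrs exG 0 = {2, 3} := by rw [nbrs_exG]; decide
theorem n1 : nbrs exG 1 = {2, 3} := by rw [nbrs_exG]; decide
theorem n2 : nbrs exG 2 = {0, 1, 4} := by rw [nbrs_exG]; decide
theorem n3 : nbrs exG 3 = {0, 1} := by rw [nbrs_exG]; decide

/-- Edge-feature reduction is strictly weaker than 1-WLE: there is a graph on 10 vertices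
with edge labels in `{0,1,2,3}`, a constant node coloring, and vertices `u`, `v` that plain
1-WL with the reduced coloring (each vertex colored by the multiset of its incident edge
labels) never distinguishes, while 1-WLE distinguishes them at round 2. -/
theorem reduction_strictly_weaker_than_wle :
    ∃ (G : SimpleGraph (Fin 10)) (ℓ : Sym2 (Fin 10) → Fin 4) (u v : Fin 10),
      (∀ i : ℕ,
        WL G (fun x => (nbrs G x).map fun w => ℓ s(x, w)) i u =
          WL G (fun x => (nbrs G x).map fun w => ℓ s(x, w)) i v) ∧
      WLE G ℓ (fun _ => ()) 2 u ≠ WLE G ℓ (fun _ => ()) 2 v := by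
  refine ⟨exG, exLab, 0, 1, ?_, ?_⟩
  · intro i
    induction i with
    | zero =>
      simp only [WL, n0, n1]
      exact (by decide : (Multiset.map (fun x => exLab s(0, x)) {2, 3} : Multiset (Fin 4)) =
        Multiset.map (fun x => exLab s(1, x)) {2, 3})
    | succ k ih =>
      simp only [WL, n0, n1]
      rw [ih]
  · intro h
    have h2 := congrArg Prod.snd h
    simp only [WLE, n0, n1] at h2
    have h3 := congrArg (Multiset.map (fun p : Fin 4 × (Unit × Multiset (Fin 4 × Unit)) =>
      (p.1, Multiset.card p.2.2))) h2
    simp [n2, n3] at h3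
    revert h3
    decide

end GT
end

section
/- Let G be a finite simple graph that is strongly regular with parameters (n, k, λ, μ) and assume 0 < μ. Then the betweenness centrality of every vertex w equals k(k−λ−1)/(2μ) as a rational number: bc(w) = k·(k−λ−1)/(2μ). In particular bc is the same for every vertex and is determined only by the parameters (n, k, λ, μ). -/
namespace GT

/-- `numSP G u v`: the number of shortest paths between `u` and `v`, i.e. the number of
walks from `u` to `v` of length `G.dist u v`. -/
noncomputable def numSP {V : Type} [Fintype V] [DecidableEq V] (G : SimpleGraph V)
    [DecidableRel G.Adj] (u v : V) : ℕ :=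
  (G.finsetWalkLength (G.dist u v) u v).card

/-- `numSPvia G w u v`: the number of shortest paths between `u` and `v` having `w` as an
internal vertex (`w` lies on the walk's support and `w ≠ u`, `w ≠ v`). -/
noncomputable def numSPvia {V : Type} [Fintype V] [DecidableEq V] (G : SimpleGraph V)
    [DecidableRel G.Adj] (w u v : V) : ℕ :=
  ((G.finsetWalkLength (G.dist u v) u v).filter fun p => w ∈ p.support ∧ w ≠ u ∧ w ≠ v).card

/-- Betweenness centrality
`bc(w) = (1/2) · Σ_{u ≠ v, u ≠ w, v ≠ w} σ_w(u,v)/σ(u,v)` (sum over ordered pairs). -/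
noncomputable def betweenness {V : Type} [Fintype V] [DecidableEq V] (G : SimpleGraph V)
    [DecidableRel G.Adj] (w : V) : ℚ :=
  (1 / 2) * ∑ u : V, ∑ v : V,
    if u ≠ v ∧ u ≠ w ∧ v ≠ w then (numSPvia G w u v : ℚ) / (numSP G u v : ℚ) else 0



open SimpleGraph in
theorem dist_two_aux {V : Type} (G : SimpleGraph V)
    {u v x : V} (huv : u ≠ v) (h : ¬ G.Adj u v) (h1 : G.Adj u x) (h2 : G.Adj x v) :
    G.dist u v = 2 := by
  have hle : G.dist u v ≤ 2 :=
    SimpleGraph.dist_le (Walk.cons h1 (Walk.cons h2 Walk.nil))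
  have hr : G.Reachable u v := ⟨Walk.cons h1 (Walk.cons h2 Walk.nil)⟩
  have h0 : G.dist u v ≠ 0 := fun h0 => huv (hr.dist_eq_zero_iff.1 h0)
  have h1' : G.dist u v ≠ 1 := fun h1 => h (SimpleGraph.dist_eq_one_iff_adj.1 h1)
  omega

open SimpleGraph in
theorem card_walk_two {V : Type} [Fintype V] [DecidableEq V] (G : SimpleGraph V)
    [DecidableRel G.Adj] (u v : V) (P : V → Prop) [DecidablePred P] :
    ((G.finsetWalkLength 2 u v).filter fun p => P (p.getVert 1)).card =
      (Finset.univ.filter fun x => G.Adj u x ∧ G.Adj x v ∧ P x).card := by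
  refine Finset.card_bij (fun p _ => p.getVert 1) ?_ ?_ ?_
  · intro p hp
    simp only [Finset.mem_filter, mem_finsetWalkLength_iff] at hp
    obtain ⟨hp, hP⟩ := hp
    match p, hp with
    | .cons h (.cons h' .nil), _ =>
      simp at hP
      simp [h, h', hP]
  · intro p hp q hq hpq
    simp only [Finset.mem_filter, mem_finsetWalkLength_iff] at hp hq
    obtain ⟨hp, -⟩ := hp
    obtain ⟨hq, -⟩ := hq
    match p, hp, q, hq with
    | .cons h (.cons h' .nil), _, .cons g (.cons g' .nil), _ =>
      simp at hpq
      subst hpq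
      rfl
  · intro x hx
    simp only [Finset.mem_filter, Finset.mem_univ, true_and] at hx
    refine ⟨.cons hx.1 (.cons hx.2.1 .nil), ?_, ?_⟩
    · simp [mem_finsetWalkLength_iff, hx.2.2]
    · simp

open SimpleGraph in
theorem term_eq {V : Type} [Fintype V] [DecidableEq V] (G : SimpleGraph V)
    [DecidableRel G.Adj] {n k l m : ℕ} (hG : G.IsSRGWith n k l m) (hm : 0 < m) (w u v : V) :
    (if u ≠ v ∧ u ≠ w ∧ v ≠ w then (numSPvia G w u v : ℚ) / (numSP G u v : ℚ) else 0) =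
      if G.Adj u w ∧ G.Adj w v ∧ ¬ G.Adj u v ∧ u ≠ v then 1 / (m : ℚ) else 0 := by
  by_cases h : u ≠ v ∧ u ≠ w ∧ v ≠ w
  swap
  · rw [if_neg h, if_neg]
    rintro ⟨h1, h2, h3, h4⟩
    exact h ⟨h4, h1.ne, h2.ne'⟩
  rw [if_pos h]
  obtain ⟨huv, huw, hvw⟩ := h
  by_cases ha : G.Adj u v
  · rw [if_neg (by tauto)]
    have hd : G.dist u v = 1 := SimpleGraph.dist_eq_one_iff_adj.2 ha
    have : numSPvia G w u v = 0 := by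
      unfold numSPvia
      rw [hd, Finset.card_eq_zero, Finset.filter_eq_empty_iff]
      rintro p hp ⟨hw, -⟩
      rw [mem_finsetWalkLength_iff] at hp
      match p, hp with
      | .cons h .nil, _ =>
        simp at hw
        rcases hw with rfl | rfl
        · exact huw rfl
        · exact hvw rfl
    simp [this]
  · have hc := hG.of_not_adj huv ha
    have hc' : (Finset.univ.filter fun x => G.Adj u x ∧ G.Adj x v ∧ True).card = m := by
      rw [← hc, ← Set.toFinset_card]
      congr 1
      ext x
      simp [mem_commonNeighbors, G.adj_comm x v]
    obtain ⟨x, hx⟩ := Finset.card_pos.1 (hc'.symm ▸ hm)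
    simp only [Finset.mem_filter, Finset.mem_univ, true_and] at hx
    have hd := dist_two_aux G huv ha hx.1 hx.2.1
    have hS : numSP G u v = m := by
      rw [numSP, hd, ← hc', ← card_walk_two G u v (fun _ => True)]
      simp
    have hV : numSPvia G w u v = if G.Adj u w ∧ G.Adj w v then 1 else 0 := by
      rw [numSPvia, hd]
      have : ((G.finsetWalkLength 2 u v).filter fun p => w ∈ p.support ∧ w ≠ u ∧ w ≠ v) =
          (G.finsetWalkLength 2 u v).filter fun p => p.getVert 1 = w := by
        apply Finset.filter_congr
        intro p hp
        rw [mem_finsetWalkLength_iff] at hp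
        match p, hp with
        | .cons h (.cons h' .nil), _ =>
          simp
          grind
      rw [this, card_walk_two G u v (fun x => x = w)]
      split_ifs with hh
      · rw [Finset.card_eq_one]
        refine ⟨w, ?_⟩
        ext x
        simp
        grind
      · rw [Finset.card_eq_zero, Finset.filter_eq_empty_iff]
        grind
    rw [hS, hV]
    by_cases hh : G.Adj u w ∧ G.Adj w v
    · rw [if_pos hh, if_pos ⟨hh.1, hh.2, ha, huv⟩]; simp
    · rw [if_neg hh, if_neg (by tauto)]; simp

open SimpleGraph in
theorem count_aux {V : Type} [Fintype V] [DecidableEq V] (G : SimpleGraph V)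
    [DecidableRel G.Adj] {n k l m : ℕ} (hG : G.IsSRGWith n k l m) (w u : V) (h : G.Adj u w) :
    (Finset.univ.filter fun v => G.Adj w v ∧ ¬ G.Adj u v ∧ u ≠ v).card + l + 1 = k := by
  have hk : (G.neighborFinset w).card = k := hG.regular w
  have hl : (Finset.univ.filter fun v => G.Adj w v ∧ G.Adj u v).card = l := by
    rw [← hG.of_adj w u h.symm, ← Set.toFinset_card]
    congr 1
    ext x
    simp [mem_commonNeighbors]
  have hs : G.neighborFinset w = insert u
      ((Finset.univ.filter fun v => G.Adj w v ∧ ¬ G.Adj u v ∧ u ≠ v) ∪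
      (Finset.univ.filter fun v => G.Adj w v ∧ G.Adj u v)) := by
    ext x
    have := h.symm
    simp
    grind
  rw [← hk, hs, Finset.card_insert_of_notMem (by simp), Finset.card_union_of_disjoint, hl]
  rw [Finset.disjoint_left]
  simp
  tauto

/-- In a strongly regular graph with `0 < μ`, the betweenness centrality of every vertex
equals `k(k-λ-1)/(2μ)`. -/
theorem srg_betweenness {V : Type} [Fintype V] [DecidableEq V] (G : SimpleGraph V)
    [DecidableRel G.Adj] {n k l m : ℕ} (hG : G.IsSRGWith n k l m) (hm : 0 < m) :
    ∀ w : V, betweenness G w = (k : ℚ) * ((k : ℚ) - (l : ℚ) - 1) / (2 * (m : ℚ)) := by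
  intro w
  unfold betweenness
  simp_rw [term_eq G hG hm w]
  have key : ∀ u : V, (∑ v : V,
      if G.Adj u w ∧ G.Adj w v ∧ ¬ G.Adj u v ∧ u ≠ v then 1 / (m : ℚ) else 0) =
      if G.Adj w u then ((k : ℚ) - l - 1) / m else 0 := by
    intro u
    by_cases h : G.Adj u w
    · have hc := count_aux G hG w u h
      simp only [h, h.symm, true_and, if_true]
      rw [← Finset.sum_filter, Finset.sum_const, nsmul_eq_mul, ← hc]
      push_cast
      ring
    · have h' : ¬ G.Adj w u := fun h' => h h'.symm
      simp [h, h']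
  have hk : (G.neighborFinset w).card = k := hG.regular w
  simp_rw [key]
  rw [← Finset.sum_filter, Finset.sum_const, nsmul_eq_mul]
  rw [← SimpleGraph.neighborFinset_eq_filter, hk]
  have : (m : ℚ) ≠ 0 := by positivity
  field_simp

end GT
end

section
/- Let G₁ and G₂ be finite simple graphs, both strongly regular with the same parameters (n, k, λ, μ), with 0 < μ. Then for every vertex v₁ of G₁ and every vertex v₂ of G₂: (i) the degrees agree, deg_{G₁}(v₁) = deg_{G₂}(v₂) = k; (ii) the sums of distances agree, Σ_u dist_{G₁}(v₁,u) = Σ_u dist_{G₂}(v₂,u), hence the closeness centralities agree; and (iii) the betweenness centralities agree, bc_{G₁}(v₁) = bc_{G₂}(v₂). In particular, strongly regular graphs with the same parameters are indistinguishable by degree, betweenness, or closeness centrality. -/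
namespace GT

section helpers
variable {V : Type} [Fintype V] [DecidableEq V] {G : SimpleGraph V} [DecidableRel G.Adj]
  {n k l m : ℕ}

lemma aux_dist (h : G.IsSRGWith n k l m) (hm : 0 < m) (u v : V) :
    G.dist u v = if u = v then 0 else if G.Adj u v then 1 else 2 := by
  split_ifs with h1 h2
  · simp [h1]
  · exact SimpleGraph.dist_eq_one_iff_adj.2 h2
  · have hc := h.of_not_adj h1 h2
    have : 0 < Fintype.card (G.commonNeighbors u v) := by omega
    obtain ⟨x, hx⟩ := Fintype.card_pos_iff.1 this
    rw [SimpleGraph.mem_commonNeighbors] at hx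
    let p : G.Walk u v := .cons hx.1 (.cons hx.2.symm .nil)
    have h3 : G.dist u v ≤ 2 := SimpleGraph.dist_le p
    have h4 : G.dist u v ≠ 0 := by
      intro h0
      exact h1 ((SimpleGraph.Reachable.dist_eq_zero_iff ⟨p⟩).1 h0)
    have h5 : G.dist u v ≠ 1 := fun h0 => h2 (SimpleGraph.dist_eq_one_iff_adj.1 h0)
    omega

lemma aux_sum (h : G.IsSRGWith n k l m) (hm : 0 < m) (v : V) :
    ∑ u, G.dist v u + k + 2 = 2 * n := by
  have h1 : ∀ u, G.dist v u + (if G.Adj v u then 1 else 0) + (if v = u then 2 else 0) = 2 := by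
    intro u
    rw [aux_dist h hm]
    by_cases e : v = u
    · subst e; simp
    · by_cases a : G.Adj v u <;> simp [e, a]
  have h2 := Finset.sum_congr (rfl : (Finset.univ : Finset V) = Finset.univ) (fun u _ => h1 u)
  rw [Finset.sum_add_distrib, Finset.sum_add_distrib] at h2
  have h3 : ∑ u, (if G.Adj v u then 1 else 0) = k := by
    rw [← h.regular.degree_eq v, ← SimpleGraph.card_neighborFinset_eq_degree,
      SimpleGraph.neighborFinset_eq_filter, Finset.card_filter]
  rw [h3] at h2
  simp [h.card] at h2
  omega

lemma aux_term (h : G.IsSRGWith n k l m) (hm : 0 < m) (w u v : V) :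
    (if u ≠ v ∧ u ≠ w ∧ v ≠ w then (numSPvia G w u v : ℚ) / (numSP G u v : ℚ) else 0)
    = if G.Adj w u then (if G.Adj w v ∧ u ≠ v ∧ ¬ G.Adj u v then 1 / (m : ℚ) else 0) else 0 := by
  by_cases huv : u = v
  · simp [huv]
  by_cases huw : u = w
  · simp [huw]
  by_cases hvw : v = w
  · simp [hvw]
  have hwu : w ≠ u := fun e => huw e.symm
  have hwv : w ≠ v := fun e => hvw e.symm
  simp only [ne_eq, huv, huw, hvw, not_false_eq_true, and_self, if_true, true_and]
  have hd := aux_dist h hm u v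
  by_cases a : G.Adj u v
  · have : numSPvia G w u v = 0 := by
      rw [numSPvia, Finset.card_eq_zero, Finset.filter_eq_empty_iff]
      intro p hp
      rw [SimpleGraph.mem_finsetWalkLength_iff, hd] at hp
      simp only [huv, a, if_true, if_false] at hp
      match p, hp with
      | .cons h' .nil, _ => simp [hwu, hwv]
    simp [this, a]
  · simp only [huv, a, if_false] at hd
    have h1 : numSP G u v = m := by
      rw [numSP, hd, ← SimpleGraph.card_set_walk_length_eq, ← h.of_not_adj huv a]
      exact Fintype.card_congr (G.walkLengthTwoEquivCommonNeighbors u v)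
    rw [h1]
    have h2 : numSPvia G w u v = if G.Adj w u ∧ G.Adj w v then 1 else 0 := by
      rw [numSPvia, hd]
      split_ifs with hw
      · rw [Finset.card_eq_one]
        refine ⟨.cons hw.1.symm (.cons hw.2 .nil), ?_⟩
        ext p
        simp only [Finset.mem_filter, SimpleGraph.mem_finsetWalkLength_iff, Finset.mem_singleton]
        constructor
        · rintro ⟨hp, hs, -, -⟩
          match p, hp, hs with
          | .cons (v := x) h' (.cons h'' .nil), _, hs =>
            have : w = x := by simpa [hwu, hwv] using hs
            subst this
            rfl
        · rintro rfl
          simp [hwu, hwv]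
      · rw [Finset.card_eq_zero, Finset.filter_eq_empty_iff]
        intro p hp
        rw [SimpleGraph.mem_finsetWalkLength_iff] at hp
        match p, hp with
        | .cons (v := x) h' (.cons h'' .nil), _ =>
          rintro ⟨hs, -, -⟩
          have : w = x := by simpa [hwu, hwv] using hs
          subst this
          exact hw ⟨h'.symm, h''⟩
    rw [h2]
    by_cases b : G.Adj w u <;> by_cases c : G.Adj w v <;> simp [a, b, c]

lemma aux_count (h : G.IsSRGWith n k l m) (w u : V) (a : G.Adj w u) :
    (Finset.univ.filter fun v => G.Adj w v ∧ u ≠ v ∧ ¬ G.Adj u v).card = k - 1 - l := by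
  have h1 : (Finset.univ.filter fun v => G.Adj w v ∧ u ≠ v ∧ ¬ G.Adj u v)
      = ((G.neighborFinset w).erase u) \ (G.commonNeighbors w u).toFinset := by
    ext v
    simp only [Finset.mem_filter, Finset.mem_univ, true_and, Finset.mem_sdiff, Finset.mem_erase,
      SimpleGraph.mem_neighborFinset, Set.mem_toFinset, SimpleGraph.mem_commonNeighbors]
    grind
  rw [h1, Finset.card_sdiff_of_subset, Finset.card_erase_of_mem, Set.toFinset_card, h.of_adj w u a,
    SimpleGraph.card_neighborFinset_eq_degree, h.regular.degree_eq]
  · simpa using a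
  · intro v
    simp only [Finset.mem_erase, SimpleGraph.mem_neighborFinset, Set.mem_toFinset,
      SimpleGraph.mem_commonNeighbors]
    rintro ⟨h1, h2⟩
    exact ⟨h2.ne', h1⟩

lemma aux_betw (h : G.IsSRGWith n k l m) (hm : 0 < m) (w : V) :
    betweenness G w = (1 / 2) * (k * ((k - 1 - l : ℕ) * (1 / (m : ℚ)))) := by
  unfold betweenness
  congr 1
  have h1 : ∀ u, (∑ v : V,
      if u ≠ v ∧ u ≠ w ∧ v ≠ w then (numSPvia G w u v : ℚ) / (numSP G u v : ℚ) else 0)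
      = if G.Adj w u then ((k - 1 - l : ℕ) * (1 / (m : ℚ))) else 0 := by
    intro u
    rw [Finset.sum_congr rfl (fun v _ => aux_term h hm w u v)]
    split_ifs with a
    · rw [← Finset.sum_filter, Finset.sum_const, aux_count h w u a, nsmul_eq_mul]
    · simp
  rw [Finset.sum_congr rfl (fun u _ => h1 u), ← Finset.sum_filter, Finset.sum_const, nsmul_eq_mul,
    ← SimpleGraph.neighborFinset_eq_filter, SimpleGraph.card_neighborFinset_eq_degree,
    h.regular.degree_eq]

end helpers

/-- Strongly regular graphs with the same parameters are indistinguishable by degree,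
closeness, or betweenness centrality. -/
theorem srg_same_params_indistinguishable {V₁ V₂ : Type} [Fintype V₁] [Fintype V₂]
    [DecidableEq V₁] [DecidableEq V₂] (G₁ : SimpleGraph V₁) (G₂ : SimpleGraph V₂)
    [DecidableRel G₁.Adj] [DecidableRel G₂.Adj] {n k l m : ℕ}
    (h₁ : G₁.IsSRGWith n k l m) (h₂ : G₂.IsSRGWith n k l m) (hm : 0 < m) :
    ∀ (v₁ : V₁) (v₂ : V₂),
      G₁.degree v₁ = k ∧ G₂.degree v₂ = k ∧
      (∑ u : V₁, G₁.dist v₁ u) = (∑ u : V₂, G₂.dist v₂ u) ∧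
      ((n : ℚ) - 1) / (∑ u : V₁, (G₁.dist v₁ u : ℚ)) =
        ((n : ℚ) - 1) / (∑ u : V₂, (G₂.dist v₂ u : ℚ)) ∧
      betweenness G₁ v₁ = betweenness G₂ v₂ := by
  intro v₁ v₂
  have hs : (∑ u : V₁, G₁.dist v₁ u) = (∑ u : V₂, G₂.dist v₂ u) := by
    have a := aux_sum h₁ hm v₁
    have b := aux_sum h₂ hm v₂
    omega
  refine ⟨h₁.regular.degree_eq v₁, h₂.regular.degree_eq v₂, hs, ?_, ?_⟩
  · rw [← Nat.cast_sum, ← Nat.cast_sum, hs]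
  · rw [aux_betw h₁ hm, aux_betw h₂ hm]

end GT
end
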